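/- arXiv:math/0606015 — 2 statements merged into one kernel-verified Lean document; each statement's English description precedes it below -/
import Mathlib

section
/- Let b : [0,∞) → ℝ be continuously differentiable with b(t) ≥ 0, b(t) ≤ C₁(1+t)^{−1} and |b'(t)| ≤ C₂(1+t)^{−2} for all t ≥ 0, and assume that either limsup_{t→∞} t·b(t) < 1/2 or liminf_{t→∞} t·b(t) > 1/2. Set λ(t) = exp(∫₀^t b(τ)dτ). Fix Λ > 0, let E(t,0) be the fundamental solution of the dissipative system and E₀(t) = [[cos(Λt), sin(Λt)], [−sin(Λt), cos(Λt)]]. Then the limit W := lim_{t→∞} λ(t)·E₀(−t)·E(t,0) exists in the 2×2 complex matrices and W is invertible. -/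
open MeasureTheory Filter

/-- The auxiliary function `λ(t) = exp(∫₀^t b)`. -/
noncomputable def lam (b : ℝ → ℝ) (t : ℝ) : ℝ := Real.exp (∫ τ in (0:ℝ)..t, b τ)

/-- The coefficient matrix `[[0, Λ], [−Λ, −2b(t)]]` of the dissipative system. -/
noncomputable def sysMat (Λ : ℝ) (b : ℝ → ℝ) (t : ℝ) : Matrix (Fin 2) (Fin 2) ℂ :=
  !![0, (Λ : ℂ); (-Λ : ℂ), ((-2 * b t : ℝ) : ℂ)]

/-- The fundamental solution `E₀(t)` of the free system. -/
noncomputable def freeMat (Λ t : ℝ) : Matrix (Fin 2) (Fin 2) ℂ :=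
  !![(Real.cos (Λ * t) : ℂ), (Real.sin (Λ * t) : ℂ);
     (-(Real.sin (Λ * t)) : ℝ), (Real.cos (Λ * t) : ℂ)]

/-!
Write `A₀` for the free generator and `N` for the elementary matrix `[[0, 0], [1, 0]]`. If
`E' = A E`, then the corrected solution `F = (1 + (b/Λ) N) E` satisfies
`F' = (A₀ - b + ((b' + b²)/Λ) N) F`. Conjugating by the free evolution removes `A₀`, multiplying by
`λ` removes `-b`, and what is left is a linear equation whose coefficient has norm at most a
constant times `|b' + b²|`, which is integrable. Its solutions therefore converge, and since `b → 0`
the correction does not change the limit. By Liouville's formula `det (λ E₀(-t) E) = λ² det E` is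
constantly `1`, and so is the determinant of the limit.
-/

open Set Topology

section NormDerivLeMulNorm

variable {F : Type*} [NormedAddCommGroup F] [NormedSpace ℝ F] {V : ℝ → F} {k : ℝ → ℝ} {a : ℝ}

-- On a half-line where `k` has mass at most `1/2`, the increment of `V` up to a point where `‖V‖`
-- is maximal is at most half of that maximum.
theorem norm_le_two_mul_norm_of_norm_deriv_le_mul_norm
    (hVc : ContinuousOn V (Ici a)) (hVd : DifferentiableOn ℝ V (Ioi a))
    (hk : IntegrableOn k (Ioi a)) (hk0 : ∀ t > a, 0 ≤ k t)
    (hVk : ∀ t > a, ‖deriv V t‖ ≤ k t * ‖V t‖) (hk_half : ∫ t in Ioi a, k t ≤ 1 / 2)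
    {t : ℝ} (ht : a ≤ t) : ‖V t‖ ≤ 2 * ‖V a‖ := by
  obtain ⟨s, ⟨has, hst⟩, hmax⟩ := isCompact_Icc.exists_isMaxOn (nonempty_Icc.2 ht)
    (hVc.mono Icc_subset_Ici_self).norm
  have hincrement : ‖V s - V a‖ ≤ ∫ τ in a..s, k τ * ‖V s‖ := by
    refine norm_sub_le_integral_of_norm_deriv_le_of_le has (hVc.mono Icc_subset_Ici_self)
      (hVd.mono Ioo_subset_Ioi_self) (.of_forall fun τ hτ => ?_) ?_
    · exact (hVk τ hτ.1).trans
        (mul_le_mul_of_nonneg_left (hmax ⟨hτ.1.le, hτ.2.le.trans hst⟩) (hk0 τ hτ.1))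
    · exact ((intervalIntegrable_iff_integrableOn_Ioc_of_le has).2
        (hk.mono_set Ioc_subset_Ioi_self)).mul_const _
  have hmass : ∫ τ in a..s, k τ ≤ 1 / 2 := by
    rw [intervalIntegral.integral_of_le has]
    exact (setIntegral_mono_set hk (ae_restrict_of_forall_mem measurableSet_Ioi hk0)
      Ioc_subset_Ioi_self.eventuallyLE).trans hk_half
  have hVs : ‖V s‖ ≤ ‖V a‖ + 1 / 2 * ‖V s‖ :=
    calc ‖V s‖ ≤ ‖V a‖ + ‖V s - V a‖ := norm_le_insert' _ _
      _ ≤ ‖V a‖ + 1 / 2 * ‖V s‖ := by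
        rw [intervalIntegral.integral_mul_const] at hincrement
        gcongr
        exact hincrement.trans (mul_le_mul_of_nonneg_right hmass (norm_nonneg _))
  have hVt : ‖V t‖ ≤ ‖V s‖ := hmax ⟨ht, le_rfl⟩
  linarith

theorem exists_tendsto_of_norm_deriv_le_mul_norm [CompleteSpace F]
    (hVd : DifferentiableOn ℝ V (Ioi a)) (hk : IntegrableOn k (Ioi a)) (hk0 : ∀ t > a, 0 ≤ k t)
    (hVk : ∀ t > a, ‖deriv V t‖ ≤ k t * ‖V t‖) : ∃ w, Tendsto V atTop (𝓝 w) := by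
  obtain ⟨c, hck, hac⟩ := (((tendsto_integral_Ioi_zero (f := k) (μ := volume) tendsto_id).eventually
    (ge_mem_nhds one_half_pos)).and (eventually_gt_atTop a)).exists
  have hk' : IntegrableOn k (Ioi c) := hk.mono_set (Ioi_subset_Ioi hac.le)
  have hVd' : DifferentiableOn ℝ V (Ioi c) := hVd.mono (Ioi_subset_Ioi hac.le)
  have hbound : ∀ t ≥ c, ‖V t‖ ≤ 2 * ‖V c‖ := fun t ht =>
    norm_le_two_mul_norm_of_norm_deriv_le_mul_norm
      (hVd.continuousOn.mono (Ici_subset_Ioi.2 hac)) hVd'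
      hk' (fun t ht => hk0 t (hac.trans ht)) (fun t ht => hVk t (hac.trans ht)) hck ht
  have hderiv : IntegrableOn (deriv V) (Ioi c) := by
    refine (hk'.mul_const (2 * ‖V c‖)).mono' (aestronglyMeasurable_deriv _ _)
      (ae_restrict_of_forall_mem measurableSet_Ioi fun t ht => ?_)
    exact (hVk t (hac.trans ht)).trans
      (mul_le_mul_of_nonneg_left (hbound t (le_of_lt ht)) (hk0 t (hac.trans ht)))
  exact ⟨_, tendsto_limUnder_of_hasDerivAt_of_integrableOn_Ioi
    (fun t ht => hVd'.hasDerivAt (Ioi_mem_nhds ht)) hderiv⟩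

end NormDerivLeMulNorm

theorem hasDerivWithinAt_det_fin_two {𝕜 R : Type*} [NontriviallyNormedField 𝕜] [NormedCommRing R]
    [NormedAlgebra 𝕜 R] {E : 𝕜 → Matrix (Fin 2) (Fin 2) R} {A : Matrix (Fin 2) (Fin 2) R}
    {s : Set 𝕜} {t : 𝕜}
    (hE : ∀ i j, HasDerivWithinAt (fun τ => E τ i j) ((A * E t) i j) s t) :
    HasDerivWithinAt (fun τ => (E τ).det) (A.trace * (E t).det) s t := by
  simp only [Matrix.det_fin_two]
  refine (((hE 0 0).fun_mul (hE 1 1)).fun_sub ((hE 0 1).fun_mul (hE 1 0))).congr_deriv ?_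
  simp only [Matrix.mul_apply, Fin.sum_univ_two, Matrix.trace_fin_two]
  ring

section Lam

variable {b : ℝ → ℝ} {t : ℝ}

theorem lam_zero : lam b 0 = 1 := by
  simp [lam]

theorem hasDerivWithinAt_lam (hb : ContinuousOn b (Ici 0)) (ht : 0 ≤ t) :
    HasDerivWithinAt (lam b) (b t * lam b t) (Ici 0) t := by
  -- `b` is arbitrary to the left of `0`, so it is first extended by a constant there.
  have hcont : Continuous fun τ => b (max τ 0) :=
    hb.comp_continuous (by fun_prop) fun τ => le_max_right τ 0
  have hlam : EqOn (lam b) (fun t => Real.exp (∫ τ in (0 : ℝ)..t, b (max τ 0))) (Ici 0) := by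
    intro t (ht : 0 ≤ t)
    refine congrArg Real.exp (intervalIntegral.integral_congr fun τ hτ => ?_)
    rw [uIcc_of_le ht] at hτ
    simp only [max_eq_left hτ.1]
  refine (((hcont.integral_hasStrictDerivAt 0 t).hasDerivAt.exp.hasDerivWithinAt).congr hlam
    (hlam ht)).congr_deriv ?_
  rw [hlam ht, max_eq_left ht, mul_comm]

theorem lam_sq_mul_det_eq {Λ : ℝ} {E : ℝ → Matrix (Fin 2) (Fin 2) ℂ}
    (hb : ContinuousOn b (Ici 0))
    (hE : ∀ t ≥ 0, ∀ i j,
      HasDerivWithinAt (fun τ => E τ i j) ((sysMat Λ b t * E t) i j) (Ici 0) t)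
    (ht : 0 ≤ t) : (lam b t : ℂ) ^ 2 * (E t).det = (E 0).det := by
  have hderiv : ∀ τ ≥ 0,
      HasDerivWithinAt (fun τ => (lam b τ : ℂ) ^ 2 * (E τ).det) 0 (Ici 0) τ := by
    intro τ hτ
    refine (((hasDerivWithinAt_lam hb hτ).ofReal_comp.fun_pow 2).fun_mul
      (hasDerivWithinAt_det_fin_two (hE τ hτ))).congr_deriv ?_
    simp only [sysMat, Matrix.trace_fin_two_of]
    push_cast
    ring
  have hconst := constant_of_has_deriv_right_zero
    (fun τ hτ => ((hderiv τ hτ.1).mono Icc_subset_Ici_self).continuousWithinAt)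
    (fun τ hτ => (hderiv τ hτ.1).mono (Ici_subset_Ici.2 hτ.1)) t ⟨ht, le_rfl⟩
  simpa [lam_zero] using hconst

end Lam

theorem hasDerivWithinAt_matrix {𝕜 m n R : Type*} [NontriviallyNormedField 𝕜] [Finite m]
    [Finite n] [NormedAddCommGroup R] [NormedSpace 𝕜 R] {E : 𝕜 → Matrix m n R} {E' : Matrix m n R}
    {s : Set 𝕜} {t : 𝕜} :
    HasDerivWithinAt E E' s t ↔ ∀ i j, HasDerivWithinAt (fun τ => E τ i j) (E' i j) s t := by
  cases nonempty_fintype m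
  cases nonempty_fintype n
  exact hasDerivWithinAt_pi.trans (forall_congr' fun _ => hasDerivWithinAt_pi)

section FreeMat

variable {Λ t : ℝ}

theorem star_freeMat : star (freeMat Λ t) = freeMat Λ (-t) := by
  ext i j
  fin_cases i <;> fin_cases j <;>
    simp [freeMat, Matrix.star_apply, ← Complex.cos_conj, ← Complex.sin_conj]

theorem freeMat_mul_freeMat_neg : freeMat Λ t * freeMat Λ (-t) = 1 := by
  have hsq := Real.cos_sq_add_sin_sq (Λ * t)
  simp only [freeMat, mul_neg, Real.cos_neg, Real.sin_neg, neg_neg, Matrix.mul_fin_two,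
    Matrix.one_fin_two]
  refine congrArg Matrix.of (Matrix.vec2_eq (Matrix.vec2_eq ?_ ?_) (Matrix.vec2_eq ?_ ?_)) <;>
    norm_cast <;> linarith

theorem freeMat_mem_unitary : freeMat Λ t ∈ unitary (Matrix (Fin 2) (Fin 2) ℂ) := by
  rw [Matrix.mem_unitaryGroup_iff, star_freeMat, freeMat_mul_freeMat_neg]

theorem det_freeMat : (freeMat Λ t).det = 1 := by
  rw [freeMat, Matrix.det_fin_two_of]
  push_cast
  linear_combination Complex.cos_sq_add_sin_sq (Λ * t)

theorem hasDerivWithinAt_freeMat_neg {s : Set ℝ} :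
    HasDerivWithinAt (fun τ => freeMat Λ (-τ)) (-(freeMat Λ (-t) * sysMat Λ 0 t)) s t := by
  have hphase : HasDerivWithinAt (fun τ : ℝ => Λ * -τ) (-Λ) s t := by
    simpa using (hasDerivWithinAt_neg t s).const_mul Λ
  have hcos : HasDerivWithinAt (fun τ => (Real.cos (Λ * -τ) : ℂ))
      ((Λ * Real.sin (Λ * -t) : ℝ) : ℂ) s t :=
    (hphase.cos.congr_deriv (by ring)).ofReal_comp
  have hsin : HasDerivWithinAt (fun τ => Real.sin (Λ * -τ)) (-(Λ * Real.cos (Λ * -t))) s t :=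
    hphase.sin.congr_deriv (by ring)
  have hprod : -(freeMat Λ (-t) * sysMat Λ 0 t) =
      !![((Λ * Real.sin (Λ * -t) : ℝ) : ℂ), ((-(Λ * Real.cos (Λ * -t)) : ℝ) : ℂ);
        ((- -(Λ * Real.cos (Λ * -t)) : ℝ) : ℂ), ((Λ * Real.sin (Λ * -t) : ℝ) : ℂ)] := by
    ext i j
    fin_cases i <;> fin_cases j <;> simp [freeMat, sysMat, mul_comm]
  rw [hprod, hasDerivWithinAt_matrix]
  simp only [Fin.forall_fin_two]
  exact ⟨⟨hcos, hsin.ofReal_comp⟩, hsin.fun_neg.ofReal_comp, hcos⟩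

end FreeMat

section InteractionPicture

open scoped Matrix.Norms.L2Operator

/-- The passage `F ↦ λ(t) E₀(-t) F(t)` that strips a solution of the dissipative system of its
free oscillation and of its decay. -/
noncomputable def interactionPicture (Λ : ℝ) (b : ℝ → ℝ) (F : ℝ → Matrix (Fin 2) (Fin 2) ℂ)
    (t : ℝ) : Matrix (Fin 2) (Fin 2) ℂ :=
  (lam b t : ℂ) • (freeMat Λ (-t) * F t)

/-- The matrix `[[1, 0], [b/Λ, 1]]`, which tends to the identity and makes the damping of the
dissipative system isotropic up to an integrable error. -/
noncomputable def correctionMat (Λ : ℝ) (b : ℝ → ℝ) (t : ℝ) : Matrix (Fin 2) (Fin 2) ℂ :=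
  1 + (b t / Λ : ℂ) • Matrix.single 1 0 1

/-- The solution `E` of the dissipative system multiplied by `correctionMat`; this is the function
whose interaction picture satisfies an equation with integrable coefficient. -/
noncomputable def correctedSolution (Λ : ℝ) (b : ℝ → ℝ) (E : ℝ → Matrix (Fin 2) (Fin 2) ℂ)
    (t : ℝ) : Matrix (Fin 2) (Fin 2) ℂ :=
  correctionMat Λ b t * E t

variable {Λ : ℝ} {b : ℝ → ℝ} {E F : ℝ → Matrix (Fin 2) (Fin 2) ℂ} {t : ℝ}

theorem det_interactionPicture :
    (interactionPicture Λ b F t).det = (lam b t : ℂ) ^ 2 * (F t).det := by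
  rw [interactionPicture, Matrix.det_smul, Matrix.det_mul, det_freeMat, one_mul, Fintype.card_fin]

theorem norm_interactionPicture_mul_le (M : ℝ → Matrix (Fin 2) (Fin 2) ℂ) :
    ‖interactionPicture Λ b (fun τ => M τ * F τ) t‖ ≤ ‖M t‖ * ‖interactionPicture Λ b F t‖ := by
  simp only [interactionPicture, norm_smul, CStarRing.norm_mem_unitary_mul _ freeMat_mem_unitary]
  rw [mul_left_comm]
  gcongr
  exact norm_mul_le _ _

theorem hasDerivWithinAt_interactionPicture {R : ℝ → Matrix (Fin 2) (Fin 2) ℂ}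
    (hb : ContinuousOn b (Ici 0)) (ht : 0 ≤ t)
    (hF : HasDerivWithinAt F (sysMat Λ 0 t * F t - (b t : ℂ) • F t + R t) (Ici 0) t) :
    HasDerivWithinAt (interactionPicture Λ b F) (interactionPicture Λ b R t) (Ici 0) t := by
  refine ((hasDerivWithinAt_lam hb ht).ofReal_comp.fun_smul
    (hasDerivWithinAt_freeMat_neg.fun_mul hF)).congr_deriv ?_
  simp only [interactionPicture, mul_add, mul_sub, neg_mul, mul_smul_comm, mul_assoc]
  push_cast
  module

theorem hasDerivWithinAt_correctionMat {s : Set ℝ} {β : ℝ} (hb : HasDerivWithinAt b β s t) :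
    HasDerivWithinAt (correctionMat Λ b) ((β / Λ : ℂ) • Matrix.single 1 0 1) s t :=
  ((hb.ofReal_comp.div_const (Λ : ℂ)).smul_const _).const_add 1

theorem smul_single_add_correctionMat_mul_sysMat (hΛ : Λ ≠ 0) (β : ℂ) :
    (β / Λ) • Matrix.single 1 0 1 + correctionMat Λ b t * sysMat Λ b t =
      (sysMat Λ 0 t - (b t : ℂ) • (1 : Matrix (Fin 2) (Fin 2) ℂ) +
        ((β + b t ^ 2) / Λ) • Matrix.single 1 0 1) * correctionMat Λ b t := by
  have hΛ' : (Λ : ℂ) ≠ 0 := Complex.ofReal_ne_zero.2 hΛ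
  have hsingle : Matrix.single 1 0 1 = (!![0, 0; 1, 0] : Matrix (Fin 2) (Fin 2) ℂ) := by
    ext i j
    fin_cases i <;> fin_cases j <;> simp
  simp only [correctionMat, hsingle, sysMat, Pi.zero_apply, Matrix.one_fin_two, Matrix.smul_of,
    Matrix.smul_vec2, smul_eq_mul, Matrix.of_add_of, Matrix.vec2_add, Matrix.of_sub_of,
    Matrix.sub_cons, Matrix.head_cons, Matrix.tail_cons, Matrix.empty_sub_empty, Matrix.mul_fin_two]
  refine congrArg Matrix.of (Matrix.vec2_eq (Matrix.vec2_eq ?_ ?_) (Matrix.vec2_eq ?_ ?_)) <;>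
    push_cast <;> field_simp <;> ring

theorem hasDerivWithinAt_correctedSolution {s : Set ℝ} {β : ℝ} (hΛ : Λ ≠ 0)
    (hb : HasDerivWithinAt b β s t) (hE : HasDerivWithinAt E (sysMat Λ b t * E t) s t) :
    HasDerivWithinAt (correctedSolution Λ b E)
      (sysMat Λ 0 t * correctedSolution Λ b E t - (b t : ℂ) • correctedSolution Λ b E t +
        (((β + b t ^ 2) / Λ : ℂ) • Matrix.single 1 0 1) * correctedSolution Λ b E t) s t := by
  refine ((hasDerivWithinAt_correctionMat hb).fun_mul hE).congr_deriv ?_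
  rw [← mul_assoc, ← add_mul, smul_single_add_correctionMat_mul_sysMat hΛ]
  simp only [correctedSolution, add_mul, sub_mul, mul_assoc, smul_mul_assoc, one_mul]

theorem single_mul_correctedSolution :
    Matrix.single 1 0 1 * correctedSolution Λ b E t = Matrix.single 1 0 1 * E t := by
  have hnilpotent : Matrix.single 1 0 1 * Matrix.single 1 0 1 = (0 : Matrix (Fin 2) (Fin 2) ℂ) :=
    Matrix.single_mul_single_of_ne _ _ _ _ zero_ne_one _
  rw [correctedSolution, correctionMat, ← mul_assoc, mul_add, mul_one, mul_smul_comm, hnilpotent,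
    smul_zero, add_zero]

theorem interactionPicture_correctedSolution_sub :
    interactionPicture Λ b (correctedSolution Λ b E) t - interactionPicture Λ b E t =
      interactionPicture Λ b
        (fun τ => ((b τ / Λ : ℂ) • Matrix.single 1 0 1) * correctedSolution Λ b E τ) t := by
  simp only [interactionPicture, smul_mul_assoc, single_mul_correctedSolution]
  rw [← smul_sub, ← mul_sub]
  simp only [correctedSolution, correctionMat, add_mul, one_mul, add_sub_cancel_left,
    smul_mul_assoc]

theorem exists_tendsto_interactionPicture_correctedSolution {b' : ℝ → ℝ} (hΛ : Λ ≠ 0)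
    (hb : ∀ t ≥ 0, HasDerivWithinAt b (b' t) (Ici 0) t)
    (hint : IntegrableOn (fun t => b' t + b t ^ 2) (Ioi 0))
    (hE : ∀ t ≥ 0, HasDerivWithinAt E (sysMat Λ b t * E t) (Ici 0) t) :
    ∃ W, Tendsto (interactionPicture Λ b (correctedSolution Λ b E)) atTop (𝓝 W) := by
  have hderiv : ∀ t > 0, HasDerivAt (interactionPicture Λ b (correctedSolution Λ b E))
      (interactionPicture Λ b (fun τ => (((b' τ + b τ ^ 2) / Λ : ℂ) • Matrix.single 1 0 1) *
        correctedSolution Λ b E τ) t) t := fun t ht =>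
    (hasDerivWithinAt_interactionPicture (fun τ hτ => (hb τ hτ).continuousWithinAt) ht.le
      (hasDerivWithinAt_correctedSolution hΛ (hb t ht.le) (hE t ht.le))).hasDerivAt
      (Ici_mem_nhds ht)
  refine exists_tendsto_of_norm_deriv_le_mul_norm
    (fun t ht => (hderiv t ht).differentiableAt.differentiableWithinAt)
    ((hint.norm.div_const |Λ|).mul_const ‖(Matrix.single 1 0 1 : Matrix (Fin 2) (Fin 2) ℂ)‖)
    (fun t _ => by positivity) fun t ht => ?_
  rw [(hderiv t ht).deriv]
  refine (norm_interactionPicture_mul_le _).trans_eq ?_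
  rw [norm_smul, norm_div, ← Complex.ofReal_pow, ← Complex.ofReal_add, Complex.norm_real,
    Complex.norm_real, Real.norm_eq_abs Λ]

theorem tendsto_interactionPicture_of_correctedSolution {W : Matrix (Fin 2) (Fin 2) ℂ}
    (hb : Tendsto b atTop (𝓝 0))
    (hW : Tendsto (interactionPicture Λ b (correctedSolution Λ b E)) atTop (𝓝 W)) :
    Tendsto (interactionPicture Λ b E) atTop (𝓝 W) := by
  have hcoeff : Tendsto
      (fun t => (b t / Λ : ℂ) • (Matrix.single 1 0 1 : Matrix (Fin 2) (Fin 2) ℂ)) atTop (𝓝 0) := by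
    have hbℂ : Tendsto (fun t => (b t : ℂ)) atTop (𝓝 0) := by
      exact_mod_cast (Complex.continuous_ofReal.tendsto 0).comp hb
    simpa using (hbℂ.div_const (Λ : ℂ)).smul_const (Matrix.single 1 0 1 : Matrix (Fin 2) (Fin 2) ℂ)
  have hdiff : Tendsto (fun t => interactionPicture Λ b (correctedSolution Λ b E) t -
      interactionPicture Λ b E t) atTop (𝓝 0) := by
    refine squeeze_zero_norm (fun t => ?_)
      (by simpa only [norm_zero, zero_mul] using hcoeff.norm.mul hW.norm)
    rw [interactionPicture_correctedSolution_sub]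
    exact norm_interactionPicture_mul_le _
  simpa using hW.sub hdiff

end InteractionPicture

section PolynomialDecay

variable {F : Type*} [NormedAddCommGroup F] {C : ℝ}

theorem tendsto_zero_of_norm_le_div_one_add {f : ℝ → F} (hf : ∀ t ≥ 0, ‖f t‖ ≤ C / (1 + t)) :
    Tendsto f atTop (𝓝 0) :=
  squeeze_zero_norm' ((eventually_ge_atTop 0).mono hf)
    ((tendsto_atTop_add_const_left atTop 1 tendsto_id).const_div_atTop C)

theorem integrableOn_Ioi_of_norm_le_div_one_add_sq {f : ℝ → F} (hf_cont : ContinuousOn f (Ici 0))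
    (hf : ∀ t ≥ 0, ‖f t‖ ≤ C / (1 + t) ^ 2) : IntegrableOn f (Ioi 0) := by
  have hdom : IntegrableOn (fun t : ℝ => C * (t + 1) ^ (-2 : ℝ)) (Ioi 0) :=
    (integrableOn_add_rpow_Ioi_of_lt (by norm_num) (by norm_num)).const_mul C
  refine hdom.mono' ((hf_cont.mono Ioi_subset_Ici_self).aestronglyMeasurable measurableSet_Ioi)
    (ae_restrict_of_forall_mem measurableSet_Ioi fun t (ht : 0 < t) => ?_)
  rw [Real.rpow_neg (by positivity), Real.rpow_two, add_comm t, ← div_eq_mul_inv]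
  exact hf t ht.le

theorem integrableOn_Ioi_add_sq_of_norm_le {f g : ℝ → ℝ} {C' : ℝ}
    (hf_cont : ContinuousOn f (Ici 0)) (hg_cont : ContinuousOn g (Ici 0))
    (hf : ∀ t ≥ 0, ‖f t‖ ≤ C / (1 + t) ^ 2) (hg : ∀ t ≥ 0, ‖g t‖ ≤ C' / (1 + t)) :
    IntegrableOn (fun t => f t + g t ^ 2) (Ioi 0) := by
  refine (integrableOn_Ioi_of_norm_le_div_one_add_sq hf_cont hf).add
    (integrableOn_Ioi_of_norm_le_div_one_add_sq (C := C' ^ 2) (hg_cont.pow 2) fun t ht => ?_)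
  rw [norm_pow, ← div_pow]
  exact pow_le_pow_left₀ (norm_nonneg _) (hg t ht) 2

end PolynomialDecay

theorem modified_wave_operator_symbol_general
    {b b' : ℝ → ℝ} (hb' : ∀ t ≥ 0, HasDerivWithinAt b (b' t) (Ici 0) t)
    (hb_lim : Tendsto b atTop (𝓝 0)) (hb_int : IntegrableOn (fun t => b' t + b t ^ 2) (Ioi 0))
    {Λ : ℝ} (hΛ : Λ ≠ 0) {E : ℝ → Matrix (Fin 2) (Fin 2) ℂ} (hE0 : E 0 = 1)
    (hE : ∀ t ≥ 0, ∀ i j,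
      HasDerivWithinAt (fun τ => E τ i j) ((sysMat Λ b t * E t) i j) (Ici 0) t) :
    ∃ W : Matrix (Fin 2) (Fin 2) ℂ,
      Tendsto (fun t => (lam b t : ℂ) • (freeMat Λ (-t) * E t)) atTop (𝓝 W) ∧ W.det = 1 := by
  obtain ⟨W, hcorrected⟩ := exists_tendsto_interactionPicture_correctedSolution hΛ hb' hb_int
    fun t ht => hasDerivWithinAt_matrix.2 (hE t ht)
  have hW := tendsto_interactionPicture_of_correctedSolution hb_lim hcorrected
  refine ⟨W, hW, tendsto_nhds_unique ((continuous_id.matrix_det.tendsto W).comp hW)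
    (tendsto_const_nhds.congr' ?_)⟩
  filter_upwards [eventually_ge_atTop 0] with t ht
  have hdet := lam_sq_mul_det_eq (fun τ hτ => (hb' τ hτ).continuousWithinAt) hE ht
  rw [hE0, Matrix.det_one] at hdet
  exact (det_interactionPicture.trans hdet).symm

/-- The fixed-frequency symbol of the modified inverse wave
operator: under the dichotomy `limsup t·b(t) < 1/2` or `liminf t·b(t) > 1/2`,
the limit `W = lim_{t→∞} λ(t)·E₀(−t)·E(t,0)` exists and is invertible. -/
theorem modified_wave_operator_symbol
    (b b' : ℝ → ℝ) (C₁ C₂ : ℝ)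
    (hb' : ∀ t ≥ (0:ℝ), HasDerivAt b (b' t) t)
    (hb'c : ContinuousOn b' (Set.Ici 0))
    (hb0 : ∀ t ≥ (0:ℝ), 0 ≤ b t)
    (hb1 : ∀ t ≥ (0:ℝ), b t ≤ C₁ / (1 + t))
    (hb2 : ∀ t ≥ (0:ℝ), |b' t| ≤ C₂ / (1 + t) ^ 2)
    (hdich : (∃ μ < (1/2 : ℝ), ∀ᶠ t in atTop, t * b t ≤ μ) ∨
             (∃ μ > (1/2 : ℝ), ∀ᶠ t in atTop, μ ≤ t * b t))
    (Λ : ℝ) (hΛ : 0 < Λ)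
    (E : ℝ → Matrix (Fin 2) (Fin 2) ℂ)
    (hE0 : E 0 = 1)
    (hE : ∀ t ≥ (0:ℝ), ∀ i j : Fin 2,
      HasDerivAt (fun τ => E τ i j) ((sysMat Λ b t * E t) i j) t) :
    ∃ W : Matrix (Fin 2) (Fin 2) ℂ,
      Tendsto (fun t => ((lam b t : ℝ) : ℂ) • (freeMat Λ (-t) * E t)) atTop (nhds W) ∧
      IsUnit W := by
  have hb_norm : ∀ t ≥ 0, ‖b t‖ ≤ C₁ / (1 + t) := fun t ht =>
    (Real.norm_of_nonneg (hb0 t ht)).trans_le (hb1 t ht)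
  have hb_cont : ContinuousOn b (Ici 0) := fun t ht => (hb' t ht).continuousAt.continuousWithinAt
  obtain ⟨W, hW, hdet⟩ := modified_wave_operator_symbol_general
    (fun t ht => (hb' t ht).hasDerivWithinAt) (tendsto_zero_of_norm_le_div_one_add hb_norm)
    (integrableOn_Ioi_add_sq_of_norm_le hb'c hb_cont hb2 hb_norm) hΛ.ne' hE0
    fun t ht i j => (hE t ht i j).hasDerivWithinAt
  exact ⟨W, hW, (Matrix.isUnit_iff_isUnit_det W).2 (hdet ▸ isUnit_one)⟩
end

section
/- Let b : [0,∞) → ℝ be continuously differentiable with b(t) ≥ 0, b(t) ≤ C₁(1+t)^{−1} and |b'(t)| ≤ C₂(1+t)^{−2} for all t ≥ 0, and assume that either limsup_{t→∞} t·b(t) < 1/2 or liminf_{t→∞} t·b(t) > 1/2. Set λ(t) = exp(∫₀^t b(τ)dτ). Fix Λ > 0 and let u : [0,∞) → ℂ be a twice continuously differentiable solution of u''(t) + 2b(t)u'(t) + Λ²u(t) = 0 with (u(0), u'(0)) ≠ (0,0). Then there exist constants c, C > 0 (depending on b, Λ and the data) such that for all t ≥ 0: c/λ(t) ≤ √(Λ²|u(t)|²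 + |u'(t)|²) ≤ C/λ(t). -/
open MeasureTheory Filter

/-!
Write `E = Λ²‖u‖² + ‖u'‖²`. The derivative of `λ²E` is `2bλ²(Λ²‖u‖² - ‖u'‖²)`, which is of size
`|b| λ²E` and need not be integrable. Adding the term `2b⟪u, u'⟫` to `E` cancels it: the derivative
of `F = λ²(E + 2b⟪u, u'⟫)` is `2b'λ²⟪u, u'⟫`. Once `|b| ≤ μ < Λ`, the inequality
`2Λ|⟪u, u'⟫| ≤ E` makes `F` comparable to `λ²E` and gives `|F'| ≤ (Λ - μ)⁻¹ |b'| F`. As `b'` is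
integrable, Grönwall's inequality, applied in both directions, keeps `F` between two positive
constants. On the compact time interval before `|b| ≤ μ` sets in, `λ²E` is continuous, and it is
positive by Grönwall's inequality for `λ²E` itself.
-/

open Set
open scoped RealInnerProductSpace

theorem hasDerivWithinAt_integral_Ici {H : Type*} [NormedAddCommGroup H] [NormedSpace ℝ H]
    [CompleteSpace H] {g : ℝ → H} {a t : ℝ} (hg : ContinuousOn g (Ici a)) (ht : a ≤ t) :
    HasDerivWithinAt (fun x ↦ ∫ s in a..x, g s) (g t) (Ici a) t := by
  have hsub : Icc a (t + 1) ⊆ Ici a := Icc_subset_Ici_self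
  have hmem : t ∈ Icc a (t + 1) := ⟨ht, by linarith⟩
  have : Fact (t ∈ Icc a (t + 1)) := ⟨hmem⟩
  have hderiv : HasDerivWithinAt (fun x ↦ ∫ s in a..x, g s) (g t) (Icc a (t + 1)) t :=
    intervalIntegral.integral_hasDerivWithinAt_right
      ((hg.mono Icc_subset_Ici_self).intervalIntegrable_of_Icc ht)
      ((hg.mono hsub).stronglyMeasurableAtFilter_nhdsWithin measurableSet_Icc t)
      ((hg.mono hsub) t hmem)
  refine hderiv.mono_of_mem_nhdsWithin ?_
  rw [← Ici_inter_Iic]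
  exact inter_mem_nhdsWithin _ (Iic_mem_nhds (lt_add_one t))

section Gronwall

variable {f f' g : ℝ → ℝ} {a t : ℝ}

theorem le_exp_integral_mul_of_deriv_le (hg : ContinuousOn g (Ici a))
    (hf : ∀ s ∈ Ici a, HasDerivWithinAt f (f' s) (Ici a) s)
    (hle : ∀ s ∈ Ici a, f' s ≤ g s * f s) (ht : a ≤ t) :
    f t ≤ Real.exp (∫ s in a..t, g s) * f a := by
  set G : ℝ → ℝ := fun x ↦ ∫ s in a..x, g s
  have hderiv : ∀ s ∈ Ici a, HasDerivWithinAt (fun x ↦ Real.exp (-G x) * f x)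
      (Real.exp (-G s) * (f' s - g s * f s)) (Ici a) s := fun s hs ↦
    ((hasDerivWithinAt_integral_Ici hg hs).fun_neg.exp.fun_mul (hf s hs)).congr_deriv (by ring)
  have hanti : AntitoneOn (fun x ↦ Real.exp (-G x) * f x) (Ici a) :=
    antitoneOn_of_hasDerivWithinAt_nonpos (convex_Ici a)
      (fun s hs ↦ (hderiv s hs).continuousWithinAt)
      (fun s hs ↦ (hderiv s (interior_subset hs)).mono interior_subset)
      (fun s hs ↦ mul_nonpos_of_nonneg_of_nonpos (Real.exp_pos _).le
        (sub_nonpos.2 (hle s (interior_subset hs))))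
  have hle_a : Real.exp (-G t) * f t ≤ f a := by
    simpa [G] using hanti self_mem_Ici ht ht
  calc f t = Real.exp (G t) * (Real.exp (-G t) * f t) := by
        rw [← mul_assoc, ← Real.exp_add, add_neg_cancel, Real.exp_zero, one_mul]
    _ ≤ Real.exp (G t) * f a := by gcongr

theorem exp_neg_integral_mul_le_of_neg_le_deriv (hg : ContinuousOn g (Ici a))
    (hf : ∀ s ∈ Ici a, HasDerivWithinAt f (f' s) (Ici a) s)
    (hle : ∀ s ∈ Ici a, -(g s * f s) ≤ f' s) (ht : a ≤ t) :
    Real.exp (-∫ s in a..t, g s) * f a ≤ f t := by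
  have hneg := le_exp_integral_mul_of_deriv_le (f := fun s ↦ -f s) (g := fun s ↦ -g s) hg.neg
    (fun s hs ↦ (hf s hs).fun_neg) (fun s hs ↦ by linarith [hle s hs]) ht
  rw [intervalIntegral.integral_neg, mul_neg] at hneg
  exact neg_le_neg_iff.1 hneg

theorem pos_of_abs_deriv_le (hg : ContinuousOn g (Ici a))
    (hf : ∀ s ∈ Ici a, HasDerivWithinAt f (f' s) (Ici a) s)
    (hle : ∀ s ∈ Ici a, |f' s| ≤ g s * f s) (hfa : 0 < f a) (ht : a ≤ t) : 0 < f t :=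
  (mul_pos (Real.exp_pos _) hfa).trans_le <|
    exp_neg_integral_mul_le_of_neg_le_deriv hg hf (fun s hs ↦ neg_le_of_abs_le (hle s hs)) ht

theorem exists_mapsTo_Icc_of_abs_deriv_le (hg : ContinuousOn g (Ici a))
    (hgi : IntegrableOn g (Ioi a))
    (hf : ∀ s ∈ Ici a, HasDerivWithinAt f (f' s) (Ici a) s)
    (hle : ∀ s ∈ Ici a, |f' s| ≤ g s * f s) (hfa : 0 < f a) :
    ∃ c > 0, ∃ C, MapsTo f (Ici a) (Icc c C) := by
  have hg_nonneg : ∀ s ∈ Ioi a, 0 ≤ g s := fun s hs ↦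
    have has : a ≤ s := le_of_lt hs
    nonneg_of_mul_nonneg_left ((abs_nonneg _).trans (hle s has))
      (pos_of_abs_deriv_le hg hf hle hfa has)
  have hint : ∀ t ∈ Ici a, ∫ s in a..t, g s ≤ ∫ s in Ioi a, g s := fun t ht ↦ by
    rw [intervalIntegral.integral_of_le ht]
    exact setIntegral_mono_set hgi (ae_restrict_of_forall_mem measurableSet_Ioi hg_nonneg)
      Ioc_subset_Ioi_self.eventuallyLE
  refine ⟨Real.exp (-∫ s in Ioi a, g s) * f a, mul_pos (Real.exp_pos _) hfa,
    Real.exp (∫ s in Ioi a, g s) * f a, fun t ht ↦ ⟨?_, ?_⟩⟩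
  · calc Real.exp (-∫ s in Ioi a, g s) * f a
        ≤ Real.exp (-∫ s in a..t, g s) * f a := by gcongr; exact hint t ht
      _ ≤ f t := exp_neg_integral_mul_le_of_neg_le_deriv hg hf
          (fun s hs ↦ neg_le_of_abs_le (hle s hs)) ht
  · calc f t ≤ Real.exp (∫ s in a..t, g s) * f a := le_exp_integral_mul_of_deriv_le hg hf
          (fun s hs ↦ le_of_abs_le (hle s hs)) ht
      _ ≤ Real.exp (∫ s in Ioi a, g s) * f a := by gcongr; exact hint t ht

end Gronwall

theorem exists_mapsTo_Icc_of_mapsTo_tail {f : ℝ → ℝ} {a T c C : ℝ}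
    (hf : ContinuousOn f (Ici a)) (hpos : ∀ t ∈ Ici a, 0 < f t) (hc : 0 < c)
    (htail : MapsTo f (Ici T) (Icc c C)) : ∃ c > 0, ∃ C, MapsTo f (Ici a) (Icc c C) := by
  have hcont : ContinuousOn f (Icc a T) := hf.mono Icc_subset_Ici_self
  obtain ⟨c₀, hc₀, hlower⟩ := isCompact_Icc.exists_forall_le' hcont fun t ht ↦ hpos t ht.1
  obtain ⟨C₀, hupper⟩ := isCompact_Icc.bddAbove_image hcont
  refine ⟨min c₀ c, lt_min hc₀ hc, max C₀ C, fun t ht ↦ ?_⟩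
  rcases le_total t T with htT | hTt
  · exact ⟨(min_le_left _ _).trans (hlower t ⟨ht, htT⟩),
      (hupper (mem_image_of_mem f ⟨ht, htT⟩)).trans (le_max_left _ _)⟩
  · exact ⟨(min_le_right _ _).trans (htail hTt).1, (htail hTt).2.trans (le_max_right _ _)⟩

theorem lam_pos (b : ℝ → ℝ) (t : ℝ) : 0 < lam b t :=
  Real.exp_pos _

theorem hasDerivWithinAt_lam_sq {b : ℝ → ℝ} {t : ℝ} (hb : ContinuousOn b (Ici 0)) (ht : 0 ≤ t) :
    HasDerivWithinAt (fun s ↦ lam b s ^ 2) (2 * b t * lam b t ^ 2) (Ici 0) t :=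
  ((hasDerivWithinAt_integral_Ici hb ht).exp.fun_pow 2).congr_deriv (by simp only [lam]; ring)

section Energy

variable {H : Type*} [NormedAddCommGroup H] {b b' : ℝ → ℝ} {Λ μ t : ℝ} {u u' : ℝ → H}

/-- The energy at frequency `Λ` of a trajectory `u` with velocity `u'`. -/
noncomputable def energy (Λ : ℝ) (u u' : ℝ → H) (t : ℝ) : ℝ :=
  Λ ^ 2 * ‖u t‖ ^ 2 + ‖u' t‖ ^ 2

theorem energy_pos (hΛ : Λ ≠ 0) (h : ¬(u t = 0 ∧ u' t = 0)) : 0 < energy Λ u u' t := by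
  unfold energy
  rcases not_and_or.1 h with hu | hu' <;> positivity

variable [InnerProductSpace ℝ H]

/-- The energy with the correction term that leaves, in the derivative of its product with `λ²`,
only a multiple of `b'`. -/
noncomputable def correctedEnergy (b : ℝ → ℝ) (Λ : ℝ) (u u' : ℝ → H) (t : ℝ) : ℝ :=
  energy Λ u u' t + 2 * b t * ⟪u t, u' t⟫

/-- `u` solves the dissipative equation `u'' + 2b(t)u' + Λ²u = 0` on `[0, ∞)` and has velocity `u'`.
Derivatives are one-sided at `0`, and the values at negative times are irrelevant. -/
structure IsDampedOscillation (b : ℝ → ℝ) (Λ : ℝ) (u u' : ℝ → H) : Prop where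
  hasDerivWithinAt : ∀ t ≥ 0, HasDerivWithinAt u (u' t) (Ici 0) t
  hasDerivWithinAt_velocity :
    ∀ t ≥ 0, HasDerivWithinAt u' (-((2 * b t) • u' t + Λ ^ 2 • u t)) (Ici 0) t

theorem two_mul_mul_abs_inner_le_energy (hΛ : 0 ≤ Λ) (u u' : ℝ → H) (t : ℝ) :
    2 * Λ * |⟪u t, u' t⟫| ≤ energy Λ u u' t :=
  calc 2 * Λ * |⟪u t, u' t⟫| ≤ 2 * Λ * (‖u t‖ * ‖u' t‖) := by
        gcongr
        exact abs_real_inner_le_norm _ _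
    _ = 2 * (Λ * ‖u t‖) * ‖u' t‖ := by ring
    _ ≤ (Λ * ‖u t‖) ^ 2 + ‖u' t‖ ^ 2 := two_mul_le_add_sq _ _
    _ = energy Λ u u' t := by rw [mul_pow, energy]

theorem abs_mul_correction_le (hΛ : 0 ≤ Λ) (hb : |b t| ≤ μ) (u u' : ℝ → H) :
    |Λ * (2 * b t * ⟪u t, u' t⟫)| ≤ μ * energy Λ u u' t :=
  calc |Λ * (2 * b t * ⟪u t, u' t⟫)| = |b t| * (2 * Λ * |⟪u t, u' t⟫|) := by
        rw [abs_mul, abs_mul, abs_mul, abs_of_nonneg hΛ, abs_two]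
        ring
    _ ≤ μ * energy Λ u u' t :=
        mul_le_mul hb (two_mul_mul_abs_inner_le_energy hΛ u u' t) (by positivity)
          ((abs_nonneg _).trans hb)

theorem sub_mul_energy_le_mul_correctedEnergy (hΛ : 0 ≤ Λ) (hb : |b t| ≤ μ) (u u' : ℝ → H) :
    (Λ - μ) * energy Λ u u' t ≤ Λ * correctedEnergy b Λ u u' t := by
  rw [correctedEnergy]
  linarith [neg_le_of_abs_le (abs_mul_correction_le hΛ hb u u')]

theorem mul_correctedEnergy_le_add_mul_energy (hΛ : 0 ≤ Λ) (hb : |b t| ≤ μ) (u u' : ℝ → H) :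
    Λ * correctedEnergy b Λ u u' t ≤ (Λ + μ) * energy Λ u u' t := by
  rw [correctedEnergy]
  linarith [le_of_abs_le (abs_mul_correction_le hΛ hb u u')]

theorem abs_lam_sq_mul_inner_le_mul_correctedEnergy (hΛ : 0 < Λ) (hμ : μ < Λ) (hb : |b t| ≤ μ)
    (u u' : ℝ → H) :
    |lam b t ^ 2 * (2 * b' t * ⟪u t, u' t⟫)| ≤
      (Λ - μ)⁻¹ * |b' t| * (lam b t ^ 2 * correctedEnergy b Λ u u' t) := by
  have hinner : 2 * |⟪u t, u' t⟫| ≤ (Λ - μ)⁻¹ * correctedEnergy b Λ u u' t := by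
    rw [inv_mul_eq_div, le_div_iff₀ (sub_pos.2 hμ)]
    refine le_of_mul_le_mul_left ?_ hΛ
    calc Λ * (2 * |⟪u t, u' t⟫| * (Λ - μ)) = (Λ - μ) * (2 * Λ * |⟪u t, u' t⟫|) := by ring
      _ ≤ (Λ - μ) * energy Λ u u' t :=
          mul_le_mul_of_nonneg_left (two_mul_mul_abs_inner_le_energy hΛ.le u u' t)
            (sub_nonneg.2 hμ.le)
      _ ≤ Λ * correctedEnergy b Λ u u' t := sub_mul_energy_le_mul_correctedEnergy hΛ.le hb u u'
  calc |lam b t ^ 2 * (2 * b' t * ⟪u t, u' t⟫)|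
      = lam b t ^ 2 * |b' t| * (2 * |⟪u t, u' t⟫|) := by
        rw [abs_mul, abs_mul, abs_mul, abs_two, abs_of_nonneg (sq_nonneg (lam b t))]
        ring
    _ ≤ lam b t ^ 2 * |b' t| * ((Λ - μ)⁻¹ * correctedEnergy b Λ u u' t) := by gcongr
    _ = _ := by ring

namespace IsDampedOscillation

theorem hasDerivWithinAt_energy (h : IsDampedOscillation b Λ u u') (ht : 0 ≤ t) :
    HasDerivWithinAt (energy Λ u u') (-(4 * b t * ‖u' t‖ ^ 2)) (Ici 0) t := by
  refine (((h.hasDerivWithinAt t ht).norm_sq.const_mul (Λ ^ 2)).fun_add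
    (h.hasDerivWithinAt_velocity t ht).norm_sq).congr_deriv ?_
  rw [inner_neg_right, inner_add_right, real_inner_smul_right, real_inner_smul_right,
    real_inner_self_eq_norm_sq, real_inner_comm]
  ring

theorem hasDerivWithinAt_inner (h : IsDampedOscillation b Λ u u') (ht : 0 ≤ t) :
    HasDerivWithinAt (fun s ↦ ⟪u s, u' s⟫)
      (‖u' t‖ ^ 2 - 2 * b t * ⟪u t, u' t⟫ - Λ ^ 2 * ‖u t‖ ^ 2) (Ici 0) t := by
  refine ((h.hasDerivWithinAt t ht).inner ℝ (h.hasDerivWithinAt_velocity t ht)).congr_deriv ?_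
  rw [inner_neg_right, inner_add_right, real_inner_smul_right, real_inner_smul_right,
    real_inner_self_eq_norm_sq, real_inner_self_eq_norm_sq]
  ring

theorem hasDerivWithinAt_lam_sq_mul_energy (h : IsDampedOscillation b Λ u u')
    (hb : ContinuousOn b (Ici 0)) (ht : 0 ≤ t) :
    HasDerivWithinAt (fun s ↦ lam b s ^ 2 * energy Λ u u' s)
      (2 * b t * (lam b t ^ 2 * (Λ ^ 2 * ‖u t‖ ^ 2 - ‖u' t‖ ^ 2))) (Ici 0) t :=
  ((hasDerivWithinAt_lam_sq hb ht).fun_mul (h.hasDerivWithinAt_energy ht)).congr_deriv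
    (by rw [energy]; ring)

theorem hasDerivWithinAt_lam_sq_mul_correctedEnergy (h : IsDampedOscillation b Λ u u')
    (hb : ∀ t ≥ 0, HasDerivWithinAt b (b' t) (Ici 0) t) (ht : 0 ≤ t) :
    HasDerivWithinAt (fun s ↦ lam b s ^ 2 * correctedEnergy b Λ u u' s)
      (lam b t ^ 2 * (2 * b' t * ⟪u t, u' t⟫)) (Ici 0) t := by
  have hb_cont : ContinuousOn b (Ici 0) := fun s hs ↦ (hb s hs).continuousWithinAt
  refine ((hasDerivWithinAt_lam_sq hb_cont ht).fun_mul ((h.hasDerivWithinAt_energy ht).fun_add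
    (((hb t ht).const_mul 2).fun_mul (h.hasDerivWithinAt_inner ht)))).congr_deriv ?_
  rw [energy]
  ring

theorem lam_sq_mul_energy_pos (h : IsDampedOscillation b Λ u u') (hΛ : Λ ≠ 0)
    (hb : ContinuousOn b (Ici 0)) (hdata : ¬(u 0 = 0 ∧ u' 0 = 0)) (ht : 0 ≤ t) :
    0 < lam b t ^ 2 * energy Λ u u' t := by
  refine pos_of_abs_deriv_le (f := fun s ↦ lam b s ^ 2 * energy Λ u u' s)
    (g := fun s ↦ 2 * |b s|) (by fun_prop)
    (fun s hs ↦ h.hasDerivWithinAt_lam_sq_mul_energy hb hs) (fun s _ ↦ ?_)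
    (mul_pos (pow_pos (lam_pos b 0) 2) (energy_pos hΛ hdata)) ht
  have hdiff : |Λ ^ 2 * ‖u s‖ ^ 2 - ‖u' s‖ ^ 2| ≤ energy Λ u u' s :=
    abs_sub_le_of_nonneg_of_le (by positivity)
      (le_add_of_nonneg_right (by positivity)) (by positivity)
      (le_add_of_nonneg_left (by positivity))
  rw [abs_mul, abs_mul, abs_mul, abs_two, abs_of_nonneg (sq_nonneg (lam b s))]
  gcongr

theorem exists_mapsTo_lam_sq_mul_correctedEnergy (h : IsDampedOscillation b Λ u u')
    (hb : ∀ t ≥ 0, HasDerivWithinAt b (b' t) (Ici 0) t) (hb'c : ContinuousOn b' (Ici 0))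
    (hb'i : IntegrableOn b' (Ioi 0)) (hΛ : 0 < Λ) (hμ : μ < Λ) {T : ℝ} (hT : 0 ≤ T)
    (hbμ : ∀ t ≥ T, |b t| ≤ μ) (hdata : ¬(u 0 = 0 ∧ u' 0 = 0)) :
    ∃ c > 0, ∃ C, MapsTo (fun s ↦ lam b s ^ 2 * correctedEnergy b Λ u u' s) (Ici T) (Icc c C) := by
  have hsub : Ici T ⊆ Ici 0 := Ici_subset_Ici.2 hT
  have hb_cont : ContinuousOn b (Ici 0) := fun s hs ↦ (hb s hs).continuousWithinAt
  have hE : 0 < energy Λ u u' T :=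
    pos_of_mul_pos_right (h.lam_sq_mul_energy_pos hΛ.ne' hb_cont hdata hT) (sq_nonneg _)
  have hF : 0 < correctedEnergy b Λ u u' T :=
    pos_of_mul_pos_right ((mul_pos (sub_pos.2 hμ) hE).trans_le
      (sub_mul_energy_le_mul_correctedEnergy hΛ.le (hbμ T le_rfl) u u')) hΛ.le
  exact exists_mapsTo_Icc_of_abs_deriv_le (g := fun s ↦ (Λ - μ)⁻¹ * |b' s|)
    ((hb'c.mono hsub).abs.const_mul _)
    ((hb'i.mono_set (Ioi_subset_Ioi hT)).abs.const_mul _)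
    (fun s hs ↦ (h.hasDerivWithinAt_lam_sq_mul_correctedEnergy hb (hsub hs)).mono hsub)
    (fun s hs ↦ abs_lam_sq_mul_inner_le_mul_correctedEnergy hΛ hμ (hbμ s hs) u u')
    (mul_pos (pow_pos (lam_pos b T) 2) hF)

theorem exists_mapsTo_lam_sq_mul_energy (h : IsDampedOscillation b Λ u u')
    (hb : ∀ t ≥ 0, HasDerivWithinAt b (b' t) (Ici 0) t) (hb'c : ContinuousOn b' (Ici 0))
    (hb'i : IntegrableOn b' (Ioi 0)) (hμ : μ < Λ) (hbμ : ∀ᶠ t in atTop, |b t| ≤ μ)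
    (hdata : ¬(u 0 = 0 ∧ u' 0 = 0)) :
    ∃ c > 0, ∃ C, MapsTo (fun s ↦ lam b s ^ 2 * energy Λ u u' s) (Ici 0) (Icc c C) := by
  obtain ⟨T, hT, hbμ⟩ := (atTop_basis' (0 : ℝ)).eventually_iff.1 hbμ
  have hμ_nonneg : 0 ≤ μ := (abs_nonneg _).trans (hbμ self_mem_Ici)
  have hΛ : 0 < Λ := hμ_nonneg.trans_lt hμ
  have hΛμ : 0 < Λ - μ := sub_pos.2 hμ
  have hb_cont : ContinuousOn b (Ici 0) := fun s hs ↦ (hb s hs).continuousWithinAt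
  obtain ⟨c, hc, C, hF⟩ := h.exists_mapsTo_lam_sq_mul_correctedEnergy hb hb'c hb'i hΛ hμ hT
    (fun t ht ↦ hbμ ht) hdata
  refine exists_mapsTo_Icc_of_mapsTo_tail (T := T) (c := Λ * c / (Λ + μ)) (C := Λ * C / (Λ - μ))
    (fun s hs ↦ (h.hasDerivWithinAt_lam_sq_mul_energy hb_cont hs).continuousWithinAt)
    (fun s hs ↦ h.lam_sq_mul_energy_pos hΛ.ne' hb_cont hdata hs) (by positivity)
    fun t ht ↦ ⟨?_, ?_⟩
  · rw [div_le_iff₀ (by positivity)]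
    calc Λ * c ≤ Λ * (lam b t ^ 2 * correctedEnergy b Λ u u' t) := by gcongr; exact (hF ht).1
      _ = lam b t ^ 2 * (Λ * correctedEnergy b Λ u u' t) := by ring
      _ ≤ lam b t ^ 2 * ((Λ + μ) * energy Λ u u' t) :=
          mul_le_mul_of_nonneg_left
            (mul_correctedEnergy_le_add_mul_energy hΛ.le (hbμ ht) u u') (sq_nonneg _)
      _ = _ := by ring
  · rw [le_div_iff₀ hΛμ]
    calc _ = lam b t ^ 2 * ((Λ - μ) * energy Λ u u' t) := by ring
      _ ≤ lam b t ^ 2 * (Λ * correctedEnergy b Λ u u' t) :=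
          mul_le_mul_of_nonneg_left
            (sub_mul_energy_le_mul_correctedEnergy hΛ.le (hbμ ht) u u') (sq_nonneg _)
      _ = Λ * (lam b t ^ 2 * correctedEnergy b Λ u u' t) := by ring
      _ ≤ Λ * C := by gcongr; exact (hF ht).2

end IsDampedOscillation

theorem two_sided_energy_decay_fixed_frequency_general (h : IsDampedOscillation b Λ u u')
    (hb : ∀ t ≥ 0, HasDerivWithinAt b (b' t) (Ici 0) t) (hb'c : ContinuousOn b' (Ici 0))
    (hb'i : IntegrableOn b' (Ioi 0)) (hμ : μ < Λ) (hbμ : ∀ᶠ t in atTop, |b t| ≤ μ)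
    (hdata : ¬(u 0 = 0 ∧ u' 0 = 0)) :
    ∃ c C : ℝ, 0 < c ∧ 0 < C ∧ ∀ t ≥ 0,
      c / lam b t ≤ √(energy Λ u u' t) ∧ √(energy Λ u u' t) ≤ C / lam b t := by
  obtain ⟨c, hc, C, hcC⟩ := h.exists_mapsTo_lam_sq_mul_energy hb hb'c hb'i hμ hbμ hdata
  have hC : 0 < C := hc.trans_le ((hcC self_mem_Ici).1.trans (hcC self_mem_Ici).2)
  refine ⟨√c, √C, Real.sqrt_pos.2 hc, Real.sqrt_pos.2 hC, fun t ht ↦ ?_⟩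
  have hsqrt : √(lam b t ^ 2 * energy Λ u u' t) = √(energy Λ u u' t) * lam b t := by
    rw [Real.sqrt_mul (sq_nonneg _), Real.sqrt_sq (lam_pos b t).le, mul_comm]
  rw [div_le_iff₀ (lam_pos b t), le_div_iff₀ (lam_pos b t), ← hsqrt]
  exact ⟨Real.sqrt_le_sqrt (hcC ht).1, Real.sqrt_le_sqrt (hcC ht).2⟩

end Energy

theorem integrableOn_Ioi_of_abs_le_div_one_add_sq {f : ℝ → ℝ} {C : ℝ}
    (hf : ContinuousOn f (Ici 0)) (hle : ∀ t ≥ 0, |f t| ≤ C / (1 + t) ^ 2) :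
    IntegrableOn f (Ioi 0) := by
  have hC : 0 ≤ C := by simpa using (abs_nonneg _).trans (hle 0 le_rfl)
  refine (integrable_inv_one_add_sq.const_mul C).integrableOn.mono'
    ((hf.mono Ioi_subset_Ici_self).aestronglyMeasurable measurableSet_Ioi)
    (ae_restrict_of_forall_mem measurableSet_Ioi fun t (ht : 0 < t) ↦ ?_)
  calc ‖f t‖ ≤ C / (1 + t) ^ 2 := hle t ht.le
    _ ≤ C / (1 + t ^ 2) := by
        gcongr
        nlinarith
    _ = C * (1 + t ^ 2)⁻¹ := div_eq_mul_inv _ _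

theorem eventually_abs_le_of_le_div_one_add {f : ℝ → ℝ} {C ε : ℝ} (hf : ∀ t ≥ 0, 0 ≤ f t)
    (hle : ∀ t ≥ 0, f t ≤ C / (1 + t)) (hε : 0 < ε) : ∀ᶠ t in atTop, |f t| ≤ ε := by
  have hlim : Tendsto (fun t : ℝ ↦ C / (1 + t)) atTop (nhds 0) :=
    (tendsto_atTop_add_const_left _ 1 tendsto_id).const_div_atTop C
  filter_upwards [hlim.eventually_le_const hε, eventually_ge_atTop 0] with t htε ht
  rw [abs_of_nonneg (hf t ht)]
  exact (hle t ht).trans htε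

theorem isDampedOscillation_of_hasDerivAt {b : ℝ → ℝ} {Λ : ℝ} {u u' u'' : ℝ → ℂ}
    (hu : ∀ t ≥ (0 : ℝ), HasDerivAt u (u' t) t) (hu' : ∀ t ≥ (0 : ℝ), HasDerivAt u' (u'' t) t)
    (heq : ∀ t ≥ (0 : ℝ), u'' t + 2 * (b t : ℂ) * u' t + (Λ : ℂ) ^ 2 * u t = 0) :
    IsDampedOscillation b Λ u u' where
  hasDerivWithinAt t ht := (hu t ht).hasDerivWithinAt
  hasDerivWithinAt_velocity t ht := (hu' t ht).hasDerivWithinAt.congr_deriv <| by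
    rw [Complex.real_smul, Complex.real_smul]
    push_cast
    linear_combination heq t ht

/-- Two-sided energy estimate at a fixed frequency `Λ > 0`:
under the dichotomy `limsup t·b(t) < 1/2` or `liminf t·b(t) > 1/2`, every
nontrivial solution of `u'' + 2b(t)u' + Λ²u = 0` satisfies
`c/λ(t) ≤ √(Λ²|u(t)|² + |u'(t)|²) ≤ C/λ(t)`. -/
theorem two_sided_energy_decay_fixed_frequency
    (b b' : ℝ → ℝ) (C₁ C₂ : ℝ)
    (hb' : ∀ t ≥ (0:ℝ), HasDerivAt b (b' t) t)
    (hb'c : ContinuousOn b' (Set.Ici 0))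
    (hb0 : ∀ t ≥ (0:ℝ), 0 ≤ b t)
    (hb1 : ∀ t ≥ (0:ℝ), b t ≤ C₁ / (1 + t))
    (hb2 : ∀ t ≥ (0:ℝ), |b' t| ≤ C₂ / (1 + t) ^ 2)
    (hdich : (∃ μ < (1/2 : ℝ), ∀ᶠ t in atTop, t * b t ≤ μ) ∨
             (∃ μ > (1/2 : ℝ), ∀ᶠ t in atTop, μ ≤ t * b t))
    (Λ : ℝ) (hΛ : 0 < Λ)
    (u u' u'' : ℝ → ℂ)
    (hu : ∀ t ≥ (0:ℝ), HasDerivAt u (u' t) t)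
    (hu' : ∀ t ≥ (0:ℝ), HasDerivAt u' (u'' t) t)
    (hu'' : ContinuousOn u'' (Set.Ici 0))
    (heq : ∀ t ≥ (0:ℝ), u'' t + 2 * (b t : ℂ) * u' t + (Λ : ℂ) ^ 2 * u t = 0)
    (hdata : ¬(u 0 = 0 ∧ u' 0 = 0)) :
    ∃ c C : ℝ, 0 < c ∧ 0 < C ∧ ∀ t ≥ (0:ℝ),
      c / lam b t ≤ Real.sqrt (Λ ^ 2 * ‖u t‖ ^ 2 + ‖u' t‖ ^ 2) ∧
      Real.sqrt (Λ ^ 2 * ‖u t‖ ^ 2 + ‖u' t‖ ^ 2) ≤ C / lam b t := by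
  exact two_sided_energy_decay_fixed_frequency_general
    (isDampedOscillation_of_hasDerivAt hu hu' heq) (fun t ht ↦ (hb' t ht).hasDerivWithinAt) hb'c
    (integrableOn_Ioi_of_abs_le_div_one_add_sq hb'c hb2) (half_lt_self hΛ)
    (eventually_abs_le_of_le_div_one_add hb0 hb1 (half_pos hΛ)) hdata
end
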